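/- arXiv:math/0102186 — 3 statements merged into one kernel-verified Lean document; each statement's English description precedes it below -/
import Mathlib

section
/- Let Δ and Δ' be finite-dimensional abstract simplicial complexes on disjoint vertex sets, with facets σ0 and σ0' respectively. Then a permutation ρ of σ0 ∪ σ0' belongs to Π(Δ*Δ', σ0 ∪ σ0') if and only if ρ(σ0) = σ0, ρ(σ0') = σ0', ρ restricted to σ0 lies in Π(Δ,σ0), and ρ restricted to σ0' lies in Π(Δ',σ0'). Consequently Π(Δ*Δ', σ0 ∪ σ0') ≅ Π(Δ,σ0) × Π(Δ',σ0'). -/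
/-- An abstract simplicial complex on the vertex set `V`: a nonempty collection of finite
subsets of `V` (the faces) which is closed under taking subsets. -/
structure ASC (V : Type*) where
  faces : Set (Finset V)
  faces_nonempty : faces.Nonempty
  down_closed : ∀ {σ τ : Finset V}, σ ∈ faces → τ ⊆ σ → τ ∈ faces

namespace ASC

variable {V : Type*} [DecidableEq V]

/-- Two facets are adjacent if they share a common ridge, i.e. they have the same
cardinality and differ in exactly one vertex. -/
def Adj (σ τ : Finset V) : Prop :=
  σ ≠ τ ∧ σ.card = τ.card ∧ (σ \ τ).card = 1

/-- A facet: an inclusion-maximal face. -/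
def IsFacet (Δ : ASC V) (σ : Finset V) : Prop :=
  σ ∈ Δ.faces ∧ ∀ τ ∈ Δ.faces, σ ⊆ τ → σ = τ

/-- The perspectivity from `σ` to `τ` as a map on vertices: it sends the unique vertex of
`σ \ τ` to the unique vertex of `τ \ σ` and fixes all other vertices. -/
noncomputable def perspMap (σ τ : Finset V) : V → V := fun x =>
  if x ∈ σ \ τ then ((τ \ σ).toList.head?.getD x) else x

/-- The projectivity along a facet path, as a map on vertices (the composition of the
consecutive perspectivities, rightmost, i.e. first perspectivity, applied first). -/
noncomputable def projMap : List (Finset V) → V → V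
  | [] => id
  | [_] => id
  | σ :: τ :: rest => (projMap (τ :: rest)) ∘ (perspMap σ τ)

/-- `L` is a facet path in `Δ` from `σ` to `τ`. -/
def IsFacetPath (Δ : ASC V) (L : List (Finset V)) (σ τ : Finset V) : Prop :=
  L ≠ [] ∧ L.head? = some σ ∧ L.getLast? = some τ ∧
    (∀ s ∈ L, Δ.IsFacet s) ∧ L.Chain' Adj

/-- The permutation `π` of the facet `σ0` is the projectivity along the facet path `L`. -/
def Represents (σ0 : Finset V) (π : Equiv.Perm {x // x ∈ σ0}) (L : List (Finset V)) : Prop :=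
  ∀ x : {x // x ∈ σ0}, (π x).1 = projMap L x.1

/-- The group of projectivities of `Δ` at the facet `σ0`: the subgroup of `Sym σ0`
consisting of the projectivities along all facet loops based at `σ0`. -/
def ProjGroup (Δ : ASC V) (σ0 : Finset V) : Subgroup (Equiv.Perm {x // x ∈ σ0}) :=
  Subgroup.closure {π | ∃ L, Δ.IsFacetPath L σ0 σ0 ∧ Represents σ0 π L}

end ASC

open ASC

variable {V V' : Type*} [DecidableEq V] [DecidableEq V']

namespace ASC

/-- The join of two finsets in the disjoint union of the vertex sets. -/
def jn (σ : Finset V) (σ' : Finset V') : Finset (V ⊕ V') := σ.image Sum.inl ∪ σ'.image Sum.inr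

theorem inl_mem_jn {σ : Finset V} {σ' : Finset V'} {x : V} : Sum.inl x ∈ jn σ σ' ↔ x ∈ σ := by
  simp [jn]

theorem inr_mem_jn {σ : Finset V} {σ' : Finset V'} {x : V'} : Sum.inr x ∈ jn σ σ' ↔ x ∈ σ' := by
  simp [jn]

theorem jn_subset {σ τ : Finset V} {σ' τ' : Finset V'} :
    jn σ σ' ⊆ jn τ τ' ↔ σ ⊆ τ ∧ σ' ⊆ τ' := by
  constructor
  · intro h
    exact ⟨fun x hx => inl_mem_jn.1 (h (inl_mem_jn.2 hx)),
      fun x hx => inr_mem_jn.1 (h (inr_mem_jn.2 hx))⟩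
  · rintro ⟨h, h'⟩ (x | x) hx
    · exact inl_mem_jn.2 (h (inl_mem_jn.1 hx))
    · exact inr_mem_jn.2 (h' (inr_mem_jn.1 hx))

theorem jn_inj {σ τ : Finset V} {σ' τ' : Finset V'} :
    jn σ σ' = jn τ τ' ↔ σ = τ ∧ σ' = τ' := by
  constructor
  · intro h
    have h1 := jn_subset.1 h.subset
    have h2 := jn_subset.1 h.symm.subset
    exact ⟨h1.1.antisymm h2.1, h1.2.antisymm h2.2⟩
  · rintro ⟨rfl, rfl⟩; rfl

theorem jn_sdiff (σ τ : Finset V) (σ' τ' : Finset V') :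
    jn σ σ' \ jn τ τ' = jn (σ \ τ) (σ' \ τ') := by
  ext (x | x) <;> simp [inl_mem_jn, inr_mem_jn]

theorem card_jn (σ : Finset V) (σ' : Finset V') : (jn σ σ').card = σ.card + σ'.card := by
  unfold jn
  rw [Finset.card_union_of_disjoint, Finset.card_image_of_injective _ Sum.inl_injective,
    Finset.card_image_of_injective _ Sum.inr_injective]
  rw [Finset.disjoint_left]
  rintro (x | x) <;> simp

theorem perspMap_jn_left {σ τ : Finset V} (σ' : Finset V') (h : Adj σ τ) :
    perspMap (jn σ σ') (jn τ σ') = Sum.map (perspMap σ τ) id := by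
  have h1 : (τ \ σ).card = 1 := by rw [← Finset.card_sdiff_comm h.2.1]; exact h.2.2
  obtain ⟨b, hb⟩ := Finset.card_eq_one.1 h1
  have h2 : jn {b} (σ' \ σ') = {Sum.inl b} := by
    rw [Finset.sdiff_self]; ext (x | x) <;> simp [inl_mem_jn, inr_mem_jn]
  funext x
  rcases x with x | x
  · by_cases hx : x ∈ σ \ τ
    · simp only [perspMap, jn_sdiff, inl_mem_jn, hx, hb, h2, Finset.toList_singleton, Sum.map_inl,
        if_true, List.head?_cons, Option.getD_some]
    · simp only [perspMap, jn_sdiff, inl_mem_jn, hx, if_false, Sum.map_inl]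
  · simp [perspMap, jn_sdiff, inr_mem_jn]

theorem perspMap_jn_right {σ τ : Finset V'} (σ' : Finset V) (h : Adj σ τ) :
    perspMap (jn σ' σ) (jn σ' τ) = Sum.map id (perspMap σ τ) := by
  have h1 : (τ \ σ).card = 1 := by rw [← Finset.card_sdiff_comm h.2.1]; exact h.2.2
  obtain ⟨b, hb⟩ := Finset.card_eq_one.1 h1
  have h2 : jn (σ' \ σ') {b} = {Sum.inr b} := by
    rw [Finset.sdiff_self]; ext (x | x) <;> simp [inl_mem_jn, inr_mem_jn]
  funext x
  rcases x with x | x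
  · simp [perspMap, jn_sdiff, inl_mem_jn]
  · by_cases hx : x ∈ σ \ τ
    · simp only [perspMap, jn_sdiff, inr_mem_jn, hx, hb, h2, Finset.toList_singleton, Sum.map_inr,
        if_true, List.head?_cons, Option.getD_some]
    · simp only [perspMap, jn_sdiff, inr_mem_jn, hx, if_false, Sum.map_inr]

theorem adj_jn_left {σ τ : Finset V} {σ' : Finset V'} : Adj (jn σ σ') (jn τ σ') ↔ Adj σ τ := by
  simp [Adj, jn_inj, jn_sdiff, card_jn]

theorem adj_jn_right {σ τ : Finset V'} {σ' : Finset V} : Adj (jn σ' σ) (jn σ' τ) ↔ Adj σ τ := by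
  simp [Adj, jn_inj, jn_sdiff, card_jn]

/-- `IsJoin J Δ Δ'`: `J` is the join. -/
def IsJoin (J : ASC (V ⊕ V')) (Δ : ASC V) (Δ' : ASC V') : Prop :=
  J.faces = {s | ∃ σ ∈ Δ.faces, ∃ σ' ∈ Δ'.faces, s = jn σ σ'}

theorem IsJoin.isFacet_jn {J : ASC (V ⊕ V')} {Δ : ASC V} {Δ' : ASC V'} (hJ : IsJoin J Δ Δ')
    {σ : Finset V} {σ' : Finset V'} :
    J.IsFacet (jn σ σ') ↔ Δ.IsFacet σ ∧ Δ'.IsFacet σ' := by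
  have key : ∀ {τ : Finset V} {τ' : Finset V'}, jn τ τ' ∈ J.faces ↔
      τ ∈ Δ.faces ∧ τ' ∈ Δ'.faces := by
    intro τ τ'
    rw [hJ]
    constructor
    · rintro ⟨a, ha, b, hb, h⟩
      obtain ⟨rfl, rfl⟩ := jn_inj.1 h
      exact ⟨ha, hb⟩
    · rintro ⟨h, h'⟩
      exact ⟨_, h, _, h', rfl⟩
  constructor
  · rintro ⟨h, hm⟩
    obtain ⟨h1, h2⟩ := key.1 h
    exact ⟨⟨h1, fun τ ht hs => (jn_inj.1 (hm _ (key.2 ⟨ht, h2⟩)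
        (jn_subset.2 ⟨hs, subset_rfl⟩))).1⟩,
      ⟨h2, fun τ ht hs => (jn_inj.1 (hm _ (key.2 ⟨h1, ht⟩) (jn_subset.2 ⟨subset_rfl, hs⟩))).2⟩⟩
  · rintro ⟨⟨h1, m1⟩, ⟨h2, m2⟩⟩
    refine ⟨key.2 ⟨h1, h2⟩, fun s hs hsub => ?_⟩
    have hs' := hs
    rw [hJ] at hs'
    obtain ⟨τ, ht, τ', ht', rfl⟩ := hs'
    obtain ⟨q1, q2⟩ := jn_subset.1 hsub
    exact jn_inj.2 ⟨m1 _ ht q1, m2 _ ht' q2⟩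

theorem IsJoin.exists_of_isFacet {J : ASC (V ⊕ V')} {Δ : ASC V} {Δ' : ASC V'}
    (hJ : IsJoin J Δ Δ') {s : Finset (V ⊕ V')} (h : J.IsFacet s) :
    ∃ σ σ', s = jn σ σ' ∧ Δ.IsFacet σ ∧ Δ'.IsFacet σ' := by
  have hs := h.1
  rw [hJ] at hs
  obtain ⟨τ, -, τ', -, rfl⟩ := hs
  exact ⟨τ, τ', rfl, hJ.isFacet_jn.1 h⟩

/-- `f` is the projectivity along some facet path from the first facet to the second. -/
inductive IsProj (Δ : ASC V) : Finset V → Finset V → (V → V) → Prop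
  | nil (σ : Finset V) (h : Δ.IsFacet σ) : IsProj Δ σ σ id
  | cons (σ τ υ : Finset V) (f : V → V) (h : Δ.IsFacet σ) (ha : Adj σ τ)
      (hf : IsProj Δ τ υ f) : IsProj Δ σ υ (f ∘ perspMap σ τ)

theorem IsProj.left {Δ : ASC V} {σ τ : Finset V} {f : V → V} (h : IsProj Δ σ τ f) :
    Δ.IsFacet σ := by
  cases h <;> assumption

theorem isProj_of_path (Δ : ASC V) (L : List (Finset V)) :
    ∀ σ τ, Δ.IsFacetPath L σ τ → IsProj Δ σ τ (projMap L) := by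
  induction L with
  | nil => intro σ τ h; exact absurd rfl h.1
  | cons a L ih =>
    rintro σ τ ⟨-, h1, h2, h3, h4⟩
    obtain rfl : a = σ := by simpa using h1
    cases L with
    | nil =>
      obtain rfl : a = τ := by simpa using h2
      exact IsProj.nil _ (h3 _ (by simp))
    | cons b L =>
      have h4' := List.isChain_cons_cons.1 h4
      refine IsProj.cons _ b _ _ (h3 _ (by simp)) h4'.1 (ih _ _ ⟨by simp, by simp, ?_, ?_, h4'.2⟩)
      · simpa using h2
      · intro s hs; exact h3 s (List.mem_cons_of_mem _ hs)

theorem IsProj.exists_path {Δ : ASC V} {σ τ : Finset V} {f : V → V} (h : IsProj Δ σ τ f) :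
    ∃ L, Δ.IsFacetPath L σ τ ∧ projMap L = f := by
  induction h with
  | nil σ h => exact ⟨[σ], ⟨by simp, by simp, by simp, by simpa using h, List.isChain_singleton _⟩, rfl⟩
  | cons σ τ υ f h ha hf ih =>
    obtain ⟨L, ⟨h0, h1, h2, h3, h4⟩, rfl⟩ := ih
    cases L with
    | nil => exact absurd rfl h0
    | cons b L =>
      obtain rfl : b = τ := by simpa using h1
      refine ⟨σ :: b :: L, ⟨by simp, by simp, ?_, ?_, List.isChain_cons_cons.2 ⟨ha, h4⟩⟩, rfl⟩
      · simpa using h2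
      · intro s hs
        rcases List.mem_cons.1 hs with rfl | hs
        · exact h
        · exact h3 s hs

theorem IsProj.join_left {J : ASC (V ⊕ V')} {Δ : ASC V} {Δ' : ASC V'} (hJ : IsJoin J Δ Δ')
    {σ' : Finset V'} (h' : Δ'.IsFacet σ') {σ τ : Finset V} {f : V → V} (h : IsProj Δ σ τ f) :
    IsProj J (jn σ σ') (jn τ σ') (Sum.map f id) := by
  induction h with
  | nil σ h => rw [Sum.map_id_id]; exact IsProj.nil _ (hJ.isFacet_jn.2 ⟨h, h'⟩)
  | cons σ τ υ f h ha hf ih =>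
    have := IsProj.cons _ _ _ _ (hJ.isFacet_jn.2 ⟨h, h'⟩) (adj_jn_left.2 ha) ih
    rwa [perspMap_jn_left _ ha, Sum.map_comp_map] at this

theorem IsProj.join_right {J : ASC (V ⊕ V')} {Δ : ASC V} {Δ' : ASC V'} (hJ : IsJoin J Δ Δ')
    {σ' : Finset V} (h' : Δ.IsFacet σ') {σ τ : Finset V'} {f : V' → V'} (h : IsProj Δ' σ τ f) :
    IsProj J (jn σ' σ) (jn σ' τ) (Sum.map id f) := by
  induction h with
  | nil σ h => rw [Sum.map_id_id]; exact IsProj.nil _ (hJ.isFacet_jn.2 ⟨h', h⟩)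
  | cons σ τ υ f h ha hf ih =>
    have := IsProj.cons _ _ _ _ (hJ.isFacet_jn.2 ⟨h', h⟩) (adj_jn_right.2 ha) ih
    rwa [perspMap_jn_right _ ha, Sum.map_comp_map] at this

theorem IsProj.split {J : ASC (V ⊕ V')} {Δ : ASC V} {Δ' : ASC V'} (hJ : IsJoin J Δ Δ')
    {s t : Finset (V ⊕ V')} {f : V ⊕ V' → V ⊕ V'} (h : IsProj J s t f) :
    ∀ σ σ' τ τ', s = jn σ σ' → t = jn τ τ' →
      ∃ g g', IsProj Δ σ τ g ∧ IsProj Δ' σ' τ' g' ∧ f = Sum.map g g' := by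
  induction h with
  | nil s h =>
    rintro σ σ' τ τ' rfl h2
    obtain ⟨rfl, rfl⟩ := jn_inj.1 h2
    obtain ⟨a, b⟩ := hJ.isFacet_jn.1 h
    exact ⟨id, id, .nil _ a, .nil _ b, Sum.map_id_id.symm⟩
  | cons s t u f h ha hf ih =>
    rintro σ σ' υ υ' rfl rfl
    obtain ⟨a, b⟩ := hJ.isFacet_jn.1 h
    obtain ⟨τ, τ', rfl, c, d⟩ := hJ.exists_of_isFacet hf.left
    obtain ⟨g, g', hg, hg', rfl⟩ := ih _ _ _ _ rfl rfl
    have hc := ha.2.2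
    rw [jn_sdiff, card_jn] at hc
    by_cases h0 : (σ' \ τ').card = 0
    · obtain rfl : σ' = τ' :=
        b.2 _ d.1 (Finset.sdiff_eq_empty_iff_subset.1 (Finset.card_eq_zero.1 h0))
      have ha' := adj_jn_left.1 ha
      refine ⟨_, g', .cons _ _ _ _ a ha' hg, hg', ?_⟩
      rw [perspMap_jn_left _ ha', Sum.map_comp_map]; rfl
    · have h0 : (σ \ τ).card = 0 := by omega
      obtain rfl : σ = τ :=
        a.2 _ c.1 (Finset.sdiff_eq_empty_iff_subset.1 (Finset.card_eq_zero.1 h0))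
      have ha' := adj_jn_right.1 ha
      refine ⟨g, _, hg, .cons _ _ _ _ b ha' hg', ?_⟩
      rw [perspMap_jn_right _ ha', Sum.map_comp_map]; rfl

theorem mem_projGroup_of_isProj {Δ : ASC V} {σ : Finset V} {f : V → V} (h : IsProj Δ σ σ f)
    (π : Equiv.Perm {x // x ∈ σ}) (hπ : ∀ x, (π x).1 = f x.1) : π ∈ Δ.ProjGroup σ := by
  obtain ⟨L, hL, rfl⟩ := h.exists_path
  exact Subgroup.subset_closure ⟨L, hL, hπ⟩

/-- The vertices of a join, as a disjoint union. -/
def jnEquiv (σ : Finset V) (σ' : Finset V') :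
    {x // x ∈ σ} ⊕ {x // x ∈ σ'} ≃ {x // x ∈ jn σ σ'} where
  toFun := Sum.elim (fun x => ⟨Sum.inl x.1, inl_mem_jn.2 x.2⟩) (fun x => ⟨Sum.inr x.1, inr_mem_jn.2 x.2⟩)
  invFun
    | ⟨Sum.inl x, h⟩ => Sum.inl ⟨x, inl_mem_jn.1 h⟩
    | ⟨Sum.inr x, h⟩ => Sum.inr ⟨x, inr_mem_jn.1 h⟩
  left_inv := by rintro (x | x) <;> rfl
  right_inv := by rintro ⟨x | x, h⟩ <;> rfl

/-- The embedding of the product of the symmetric groups. -/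
def jnHom (σ : Finset V) (σ' : Finset V') :
    Equiv.Perm {x // x ∈ σ} × Equiv.Perm {x // x ∈ σ'} →* Equiv.Perm {x // x ∈ jn σ σ'} :=
  ((jnEquiv σ σ').permCongrHom : _ →* _).comp (Equiv.Perm.sumCongrHom _ _)

theorem jnHom_injective (σ : Finset V) (σ' : Finset V') : Function.Injective (jnHom σ σ') :=
  (jnEquiv σ σ').permCongrHom.injective.comp Equiv.Perm.sumCongrHom_injective

theorem jnHom_inl (σ : Finset V) (σ' : Finset V') (p) (x : V) (h : Sum.inl x ∈ jn σ σ') :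
    (jnHom σ σ' p ⟨Sum.inl x, h⟩).1 = Sum.inl (p.1 ⟨x, inl_mem_jn.1 h⟩).1 := rfl

theorem jnHom_inr (σ : Finset V) (σ' : Finset V') (p) (x : V') (h : Sum.inr x ∈ jn σ σ') :
    (jnHom σ σ' p ⟨Sum.inr x, h⟩).1 = Sum.inr (p.2 ⟨x, inr_mem_jn.1 h⟩).1 := rfl

/-- A map preserving a finset and injective on it gives a permutation. -/
theorem exists_perm {σ : Finset V} (g : V → V) (hm : ∀ x ∈ σ, g x ∈ σ)
    (hi : ∀ x ∈ σ, ∀ y ∈ σ, g x = g y → x = y) :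
    ∃ π : Equiv.Perm {x // x ∈ σ}, ∀ x, (π x).1 = g x.1 := by
  have hinj : Function.Injective (fun x : {x // x ∈ σ} => (⟨g x.1, hm _ x.2⟩ : {x // x ∈ σ})) := by
    intro x y h
    exact Subtype.ext (hi _ x.2 _ y.2 (congrArg Subtype.val h))
  exact ⟨Equiv.ofBijective _ (Finite.injective_iff_bijective.1 hinj), fun x => rfl⟩

theorem IsJoin.projGroup_eq {J : ASC (V ⊕ V')} {Δ : ASC V} {Δ' : ASC V'} (hJ : IsJoin J Δ Δ')
    {σ : Finset V} {σ' : Finset V'} (h : Δ.IsFacet σ) (h' : Δ'.IsFacet σ') :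
    J.ProjGroup (jn σ σ') = ((Δ.ProjGroup σ).prod (Δ'.ProjGroup σ')).map (jnHom σ σ') := by
  apply le_antisymm
  · refine (Subgroup.closure_le _).2 ?_
    rintro ρ ⟨L, hL, hρ⟩
    obtain ⟨g, g', hg, hg', hf⟩ := (isProj_of_path J L _ _ hL).split hJ _ _ _ _ rfl rfl
    have e1 : ∀ x (hx : Sum.inl x ∈ jn σ σ'), (ρ ⟨Sum.inl x, hx⟩).1 = Sum.inl (g x) := by
      intro x hx; rw [hρ, hf]; rfl
    have e2 : ∀ x (hx : Sum.inr x ∈ jn σ σ'), (ρ ⟨Sum.inr x, hx⟩).1 = Sum.inr (g' x) := by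
      intro x hx; rw [hρ, hf]; rfl
    obtain ⟨π, hπ⟩ := exists_perm (σ := σ) g
      (fun x hx => inl_mem_jn.1 (e1 x (inl_mem_jn.2 hx) ▸ (ρ _).2))
      (fun x hx y hy hxy => by
        have : ρ ⟨Sum.inl x, inl_mem_jn.2 hx⟩ = ρ ⟨Sum.inl y, inl_mem_jn.2 hy⟩ :=
          Subtype.ext (by rw [e1, e1, hxy])
        simpa using ρ.injective this)
    obtain ⟨π', hπ'⟩ := exists_perm (σ := σ') g'
      (fun x hx => inr_mem_jn.1 (e2 x (inr_mem_jn.2 hx) ▸ (ρ _).2))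
      (fun x hx y hy hxy => by
        have : ρ ⟨Sum.inr x, inr_mem_jn.2 hx⟩ = ρ ⟨Sum.inr y, inr_mem_jn.2 hy⟩ :=
          Subtype.ext (by rw [e2, e2, hxy])
        simpa using ρ.injective this)
    refine ⟨(π, π'), ⟨mem_projGroup_of_isProj hg π hπ, mem_projGroup_of_isProj hg' π' hπ'⟩, ?_⟩
    ext ⟨x | x, hx⟩ : 2
    · rw [jnHom_inl, e1, hπ]
    · rw [jnHom_inr, e2, hπ']
  · have k1 : Δ.ProjGroup σ ≤ (J.ProjGroup (jn σ σ')).comap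
        ((jnHom σ σ').comp (MonoidHom.inl _ _)) := by
      refine (Subgroup.closure_le _).2 ?_
      rintro π ⟨L, hL, hπ⟩
      refine mem_projGroup_of_isProj ((isProj_of_path Δ L _ _ hL).join_left hJ h') _ ?_
      rintro ⟨x | x, hx⟩
      · exact congrArg Sum.inl (hπ ⟨x, inl_mem_jn.1 hx⟩)
      · rfl
    have k2 : Δ'.ProjGroup σ' ≤ (J.ProjGroup (jn σ σ')).comap
        ((jnHom σ σ').comp (MonoidHom.inr _ _)) := by
      refine (Subgroup.closure_le _).2 ?_
      rintro π ⟨L, hL, hπ⟩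
      refine mem_projGroup_of_isProj ((isProj_of_path Δ' L _ _ hL).join_right hJ h) _ ?_
      rintro ⟨x | x, hx⟩
      · rfl
      · exact congrArg Sum.inr (hπ ⟨x, inr_mem_jn.1 hx⟩)
    rintro _ ⟨⟨π, π'⟩, ⟨hp, hp'⟩, rfl⟩
    have a1 : jnHom σ σ' (π, 1) ∈ J.ProjGroup (jn σ σ') := k1 hp
    have a2 : jnHom σ σ' (1, π') ∈ J.ProjGroup (jn σ σ') := k2 hp'
    have a3 := mul_mem a1 a2
    rwa [← map_mul, Prod.mk_mul_mk, mul_one, one_mul] at a3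

end ASC

/-- **Proposition (join)**: let `Δ`, `Δ'` be finite-dimensional simplicial complexes on
disjoint vertex sets (modelled as the two summands of `V ⊕ V'`), and let `J` be their join.
A permutation `ρ` of the facet `σ0 ∪ σ0'` of the join lies in `Π(J, σ0 ∪ σ0')` iff it
preserves `σ0` and `σ0'` and restricts on them to elements of `Π(Δ,σ0)` and `Π(Δ',σ0')`.
Consequently `Π(Δ*Δ', σ0 ∪ σ0') ≅ Π(Δ,σ0) × Π(Δ',σ0')`. -/
theorem projGroup_join (Δ : ASC V) (Δ' : ASC V')
    (hdim : ∃ d : ℕ, ∀ σ ∈ Δ.faces, σ.card ≤ d + 1)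
    (hdim' : ∃ d : ℕ, ∀ σ ∈ Δ'.faces, σ.card ≤ d + 1)
    (J : ASC (V ⊕ V'))
    (hJ : J.faces = {s | ∃ σ ∈ Δ.faces, ∃ σ' ∈ Δ'.faces,
      s = σ.image Sum.inl ∪ σ'.image Sum.inr})
    (σ0 : Finset V) (σ0' : Finset V') (h0 : Δ.IsFacet σ0) (h0' : Δ'.IsFacet σ0') :
    (∀ ρ : Equiv.Perm {x // x ∈ σ0.image Sum.inl ∪ σ0'.image Sum.inr},
      ρ ∈ J.ProjGroup (σ0.image Sum.inl ∪ σ0'.image Sum.inr) ↔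
        ((∀ x, (x.1.isLeft → (ρ x).1.isLeft) ∧ (x.1.isRight → (ρ x).1.isRight)) ∧
          (∃ π ∈ Δ.ProjGroup σ0, ∀ x : {x // x ∈ σ0},
            (ρ ⟨Sum.inl x.1, Finset.mem_union_left _ (Finset.mem_image_of_mem _ x.2)⟩).1 =
              Sum.inl (π x).1) ∧
          (∃ π' ∈ Δ'.ProjGroup σ0', ∀ x : {x // x ∈ σ0'},
            (ρ ⟨Sum.inr x.1, Finset.mem_union_right _ (Finset.mem_image_of_mem _ x.2)⟩).1 =
              Sum.inr (π' x).1))) ∧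
    Nonempty (↥(J.ProjGroup (σ0.image Sum.inl ∪ σ0'.image Sum.inr)) ≃*
      ↥(Δ.ProjGroup σ0) × ↥(Δ'.ProjGroup σ0')) := by
  have hJ' : IsJoin J Δ Δ' := hJ
  have key := hJ'.projGroup_eq h0 h0'
  change (∀ ρ : Equiv.Perm {x // x ∈ jn σ0 σ0'}, ρ ∈ J.ProjGroup (jn σ0 σ0') ↔ _) ∧
    Nonempty (↥(J.ProjGroup (jn σ0 σ0')) ≃* _)
  rw [key]
  refine ⟨fun ρ => ⟨?_, ?_⟩, ⟨?_⟩⟩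
  · rintro ⟨⟨π, π'⟩, ⟨hp, hp'⟩, rfl⟩
    refine ⟨?_, ⟨π, hp, fun x => rfl⟩, ⟨π', hp', fun x => rfl⟩⟩
    rintro ⟨x | x, hx⟩
    · exact ⟨fun _ => rfl, fun h => by simp at h⟩
    · exact ⟨fun h => by simp at h, fun _ => rfl⟩
  · rintro ⟨-, ⟨π, hp, e⟩, ⟨π', hp', e'⟩⟩
    refine ⟨(π, π'), ⟨hp, hp'⟩, ?_⟩
    ext ⟨x | x, hx⟩ : 2
    · exact (e ⟨x, inl_mem_jn.1 hx⟩).symm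
    · exact (e' ⟨x, inr_mem_jn.1 hx⟩).symm
  · exact ((Subgroup.equivMapOfInjective _ _ (jnHom_injective σ0 σ0')).symm).trans
      (Subgroup.prodEquiv _ _)
end

section
/- Let d ≥ 1 and let Δ be the boundary complex of the d-simplex, i.e. the collection of all proper subsets of {0,1,…,d}. Then for every facet σ0 of Δ (a d-element subset of {0,…,d}) the group of projectivities Π(Δ,σ0) is the full symmetric group Sym(σ0); in particular Π(Δ,σ0) ≅ S_d. -/
open ASC

/-- The boundary complex of the `d`-simplex: the collection of all proper subsets of
`{0, 1, …, d}`. -/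
def simplexBoundary (d : ℕ) : ASC (Fin (d + 1)) where
  faces := {s : Finset (Fin (d + 1)) | s ≠ Finset.univ}
  faces_nonempty := ⟨∅, by
    simp only [Set.mem_setOf_eq]
    exact fun h => by simpa [← h] using Finset.mem_univ (0 : Fin (d + 1))⟩
  down_closed := by
    intro σ τ hσ hsub
    simp only [Set.mem_setOf_eq] at *
    intro h
    exact hσ (Finset.univ_subset_iff.mp (h ▸ hsub))

theorem facet_compl_singleton (d : ℕ) (v : Fin (d + 1)) :
    (simplexBoundary d).IsFacet {v}ᶜ := by
  refine ⟨?_, ?_⟩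
  · intro h
    have : v ∈ ({v}ᶜ : Finset (Fin (d + 1))) := by rw [h]; simp
    simp at this
  · intro τ hτ hs
    refine Finset.Subset.antisymm hs ?_
    intro x hx
    simp only [Finset.mem_compl, Finset.mem_singleton]
    rintro rfl
    apply hτ
    ext y
    simp only [Finset.mem_univ, iff_true]
    by_cases hy : y = x
    · exact hy ▸ hx
    · exact hs (by simpa using hy)

theorem facet_eq_compl (d : ℕ) (σ : Finset (Fin (d + 1)))
    (h : (simplexBoundary d).IsFacet σ) : ∃ v, σ = {v}ᶜ := by
  have h1 : σ ≠ Finset.univ := h.1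
  have : ∃ v, v ∉ σ := by
    by_contra hc
    push Not at hc
    exact h1 (Finset.eq_univ_iff_forall.mpr hc)
  obtain ⟨v, hv⟩ := this
  refine ⟨v, h.2 _ (facet_compl_singleton d v).1 ?_⟩
  intro x hx
  simp only [Finset.mem_compl, Finset.mem_singleton]
  rintro rfl
  exact hv hx

theorem singleton_compl_sdiff {d : ℕ} {v w : Fin (d + 1)} (h : v ≠ w) :
    ({v}ᶜ \ {w}ᶜ : Finset (Fin (d + 1))) = {w} := by
  ext x
  simp only [Finset.mem_sdiff, Finset.mem_compl, Finset.mem_singleton, not_not]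
  constructor
  · exact fun h => h.2
  · rintro rfl
    exact ⟨h.symm, rfl⟩

theorem adj_compl {d : ℕ} {v w : Fin (d + 1)} (h : v ≠ w) :
    ASC.Adj ({v}ᶜ : Finset (Fin (d + 1))) {w}ᶜ := by
  refine ⟨?_, ?_, ?_⟩
  · intro he
    exact h (by simpa using he)
  · simp [Finset.card_compl]
  · rw [singleton_compl_sdiff h]; simp

theorem perspMap_compl {d : ℕ} {v w : Fin (d + 1)} (h : v ≠ w) (x : Fin (d + 1)) :
    ASC.perspMap ({v}ᶜ : Finset (Fin (d + 1))) {w}ᶜ x = if x = w then v else x := by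
  unfold ASC.perspMap
  rw [singleton_compl_sdiff h, singleton_compl_sdiff h.symm]
  simp

theorem projGroup_eq_top (d : ℕ) (σ0 : Finset (Fin (d + 1)))
    (hσ0 : (simplexBoundary d).IsFacet σ0) :
    (simplexBoundary d).ProjGroup σ0 = ⊤ := by
  obtain ⟨v, rfl⟩ := facet_eq_compl d σ0 hσ0
  rw [eq_top_iff, ← Equiv.Perm.closure_isSwap]
  apply Subgroup.closure_mono
  rintro π ⟨⟨a, ha⟩, ⟨b, hb⟩, hab, rfl⟩
  have hav : a ≠ v := by simpa using ha
  have hbv : b ≠ v := by simpa using hb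
  have hab' : a ≠ b := fun h => hab (Subtype.ext h)
  refine ⟨[{v}ᶜ, {a}ᶜ, {b}ᶜ, {v}ᶜ], ⟨by simp, by simp, by simp, ?_, ?_⟩, ?_⟩
  · intro s hs
    simp only [List.mem_cons, List.not_mem_nil, or_false] at hs
    rcases hs with rfl | rfl | rfl | rfl <;> exact facet_compl_singleton d _
  · exact List.isChain_cons_cons.mpr ⟨adj_compl hav.symm, List.isChain_cons_cons.mpr
      ⟨adj_compl hab', List.isChain_cons_cons.mpr ⟨adj_compl hbv, List.isChain_singleton _⟩⟩⟩
  · rintro ⟨x, hx⟩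
    have hxv : x ≠ v := by simpa using hx
    simp only [ASC.projMap, Function.comp, id, perspMap_compl hav.symm, perspMap_compl hab',
      perspMap_compl hbv, Equiv.swap_apply_def, Subtype.mk.injEq]
    split_ifs <;> simp_all

/-- **Corollary**: the group of projectivities of the boundary of the `d`-simplex at any
facet is the full symmetric group on that facet; in particular it is isomorphic to `S_d`. -/
theorem projGroup_simplexBoundary (d : ℕ) (hd : 1 ≤ d) (σ0 : Finset (Fin (d + 1)))
    (hσ0 : (simplexBoundary d).IsFacet σ0) :
    (simplexBoundary d).ProjGroup σ0 = ⊤ ∧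
      Nonempty (↥((simplexBoundary d).ProjGroup σ0) ≃* Equiv.Perm (Fin d)) := by
  have htop := projGroup_eq_top d σ0 hσ0
  refine ⟨htop, ?_⟩
  obtain ⟨v, rfl⟩ := facet_eq_compl d σ0 hσ0
  rw [htop]
  have e : {x // x ∈ ({v}ᶜ : Finset (Fin (d + 1)))} ≃ Fin d :=
    Fintype.equivFinOfCardEq (by simp [Finset.card_compl])
  exact ⟨Subgroup.topEquiv.trans e.permCongrHom⟩
end

section
/- Let P be a simple d-polytope and let c be a coloring of the facets of P with d colors such that any two distinct facets sharing a vertex receive different colors. Then for every edge {v,w} of P one has c(F(v,w)) = c(F(w,v)), and assigning to each edge {v,w} this common color yields a proper edge coloring of the graph of P with d colors, i.e. any two distinct edges of P sharing a vertex receive different colors. -/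
/-- A (full-dimensional) convex `d`-polytope: the convex hull of a finite set of points in
`ℝ^d` with nonempty interior. -/
structure ConvPolytope (d : ℕ) where
  carrier : Set (EuclideanSpace ℝ (Fin d))
  isHull : ∃ s : Finset (EuclideanSpace ℝ (Fin d)), carrier = convexHull ℝ ↑s
  int_nonempty : (interior carrier).Nonempty

namespace ConvPolytope

variable {d : ℕ}

/-- A proper face of the polytope `P`: the intersection of `P` with a supporting
hyperplane. -/
def IsFace (P : ConvPolytope d) (F : Set (EuclideanSpace ℝ (Fin d))) : Prop :=
  ∃ (f : EuclideanSpace ℝ (Fin d) →L[ℝ] ℝ) (c : ℝ), f ≠ 0 ∧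
    (∀ x ∈ P.carrier, f x ≤ c) ∧ F = {x ∈ P.carrier | f x = c}

/-- The dimension of a subset of `ℝ^d`: the dimension of its affine span. -/
noncomputable def dimOf (F : Set (EuclideanSpace ℝ (Fin d))) : ℕ :=
  Module.finrank ℝ (affineSpan ℝ F).direction

/-- `v` is a vertex of `P` (a face of dimension 0). -/
def IsVertex (P : ConvPolytope d) (v : EuclideanSpace ℝ (Fin d)) : Prop :=
  P.IsFace {v}

/-- The vertices `v` and `w` are adjacent: they span an edge (1-dimensional face) of `P`. -/
def IsEdge (P : ConvPolytope d) (v w : EuclideanSpace ℝ (Fin d)) : Prop :=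
  v ≠ w ∧ P.IsFace (segment ℝ v w)

/-- A 2-face of `P`: a face of dimension 2. -/
def Is2Face (P : ConvPolytope d) (F : Set (EuclideanSpace ℝ (Fin d))) : Prop :=
  P.IsFace F ∧ dimOf F = 2

/-- A facet of `P`: a nonempty face of dimension `d - 1`. -/
def IsFacetOf (P : ConvPolytope d) (F : Set (EuclideanSpace ℝ (Fin d))) : Prop :=
  P.IsFace F ∧ F.Nonempty ∧ dimOf F = d - 1

/-- `P` is simple: every vertex lies in exactly `d` facets. -/
def IsSimple (P : ConvPolytope d) : Prop :=
  ∀ v, P.IsVertex v → {F | P.IsFacetOf F ∧ v ∈ F}.ncard = d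

/-- `P` is even: every 2-face of `P` has an even number of vertices. -/
def IsEven (P : ConvPolytope d) : Prop :=
  ∀ F, P.Is2Face F → Even {v | P.IsVertex v ∧ v ∈ F}.ncard

end ConvPolytope

open ConvPolytope

section Helpers

/-- Small perturbations of a functional that is nonpositive on a finite set. -/
theorem aux_perturb {V : Type*} [NormedAddCommGroup V] [NormedSpace ℝ V] (T : Finset V)
    (f b : V →L[ℝ] ℝ) (hf : ∀ t ∈ T, f t ≤ 0) (hb : ∀ t ∈ T, f t = 0 → b t ≤ 0) :
    ∃ ε : ℝ, 0 < ε ∧ ∀ t ∈ T, (f + ε • b) t ≤ 0 := by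
  have key : ∀ t ∈ T, ∀ᶠ ε : ℝ in nhdsWithin 0 (Set.Ioi 0), (f + ε • b) t ≤ 0 := by
    intro t ht
    rcases (hf t ht).lt_or_eq with h | h
    · have hcont : Continuous (fun ε : ℝ => f t + ε * b t) := by fun_prop
      have h0 : (fun ε : ℝ => f t + ε * b t) 0 < 0 := by simpa using h
      have := (hcont.continuousAt (x := 0)).eventually (gt_mem_nhds h0)
      filter_upwards [nhdsWithin_le_nhds this] with ε hε
      simpa using hε.le
    · filter_upwards [self_mem_nhdsWithin] with ε hε
      have hε' : 0 < ε := hε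
      have := hb t ht h
      simp only [add_apply, smul_apply, smul_eq_mul, h]
      nlinarith
  have h2 := (Filter.eventually_all_finset T).2 key
  have h3 : ∀ᶠ ε : ℝ in nhdsWithin 0 (Set.Ioi 0), 0 < ε := self_mem_nhdsWithin
  obtain ⟨ε, h, h'⟩ := (h2.and h3).exists
  exact ⟨ε, h', h⟩

open Classical in
/-- Improving a separating functional to a facet functional. -/
theorem aux_improve {V : Type*} [NormedAddCommGroup V] [NormedSpace ℝ V] [FiniteDimensional ℝ V]
    (T : Finset V) (hspan : ∀ b : V →L[ℝ] ℝ, (∀ t ∈ T, b t = 0) → b = 0)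
    (y : V) (f : V →L[ℝ] ℝ) (hf : ∀ t ∈ T, f t ≤ 0) (hy : 0 < f y) :
    ∃ a : V →L[ℝ] ℝ, (∀ t ∈ T, a t ≤ 0) ∧ 0 < a y ∧
      ∀ z, a z = 0 → z ∈ Submodule.span ℝ {t | t ∈ T ∧ a t = 0} := by
  let S : Set (V →L[ℝ] ℝ) := {a | (∀ t ∈ T, a t ≤ 0) ∧ 0 < a y}
  let N : (V →L[ℝ] ℝ) → ℕ := fun a => (T.filter (fun t => a t = 0)).card
  have hex : ∃ a ∈ S, ∀ a' ∈ S, N a' ≤ N a := by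
    have hfin : (N '' S).Finite := by
      refine (Set.finite_Iic T.card).subset ?_
      rintro _ ⟨a, _, rfl⟩
      exact Finset.card_filter_le _ _
    obtain ⟨n, ⟨a, ha, rfl⟩, hn⟩ := Set.exists_max_image (N '' S) id hfin ⟨_, f, ⟨hf, hy⟩, rfl⟩
    exact ⟨a, ha, fun a' ha' => hn _ ⟨a', ha', rfl⟩⟩
  obtain ⟨a, ⟨haT, hay⟩, hmax⟩ := hex
  refine ⟨a, haT, hay, ?_⟩
  intro z hz
  by_contra hzW
  obtain ⟨b0, hb0z, hb0⟩ := Submodule.exists_le_ker_of_notMem hzW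
  let b1 : V →L[ℝ] ℝ := b0.toContinuousLinearMap - (b0 y / a y) • a
  have hb1z : b1 z ≠ 0 := by simpa [b1, hz] using hb0z
  have hb1y : b1 y = 0 := by simp [b1, hay.ne']
  have hb1W : ∀ t ∈ T, a t = 0 → b1 t = 0 := by
    intro t ht h
    have : b0 t = 0 := hb0 (Submodule.subset_span ⟨ht, h⟩)
    simp [b1, h, this]
  have hex2 : ∃ b : V →L[ℝ] ℝ, b y = 0 ∧ (∀ t ∈ T, a t = 0 → b t = 0) ∧ ∃ t ∈ T, 0 < b t := by
    have hne : ∃ t ∈ T, b1 t ≠ 0 := by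
      by_contra! hcon
      exact hb1z (by simp [hspan b1 hcon])
    obtain ⟨t, ht, hbt⟩ := hne
    rcases lt_or_gt_of_ne hbt with h | h
    · exact ⟨-b1, by simp [hb1y], fun t ht h => by simp [hb1W t ht h], t, ht, by simpa using h⟩
    · exact ⟨b1, hb1y, hb1W, t, ht, h⟩
  obtain ⟨b, hby, hbW, t1, ht1, hbt1⟩ := hex2
  obtain ⟨t0, ht0, hmin⟩ := (T.filter (fun t => 0 < b t)).exists_min_image
    (fun t => - a t / b t) ⟨t1, by simp [ht1, hbt1]⟩
  simp only [Finset.mem_filter] at ht0 hmin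
  obtain ⟨ht0T, hbt0⟩ := ht0
  set l : ℝ := - a t0 / b t0 with hl
  have hl0 : 0 ≤ l := div_nonneg (by linarith [haT t0 ht0T]) hbt0.le
  have happ : ∀ x, (a + l • b) x = a x + l * b x := fun x => by simp
  have hS : a + l • b ∈ S := by
    refine ⟨fun t ht => ?_, ?_⟩
    · rw [happ]
      rcases le_or_gt (b t) 0 with h | h
      · nlinarith [haT t ht]
      · have := hmin t ⟨ht, h⟩
        rw [le_div_iff₀ h] at this
        linarith
    · rw [happ, hby]; simpa using hay
  have hlt : N a < N (a + l • b) := by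
    refine Finset.card_lt_card ⟨?_, ?_⟩
    · intro t ht
      simp only [Finset.mem_filter] at ht ⊢
      refine ⟨ht.1, ?_⟩
      rw [happ, ht.2, hbW t ht.1 ht.2]; simp
    · intro hsub
      have : t0 ∈ T.filter (fun t => (a + l • b) t = 0) := by
        simp only [Finset.mem_filter]
        refine ⟨ht0T, ?_⟩
        rw [happ, hl]
        field_simp
        ring
      have h2 := hsub this
      simp only [Finset.mem_filter] at h2
      exact hbt0.ne' (hbW t0 h2.1 h2.2)
  exact absurd (hmax _ hS) (not_le.2 hlt)

variable {d : ℕ}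

theorem aux_const (P : ConvPolytope d) (b : EuclideanSpace ℝ (Fin d) →L[ℝ] ℝ) (r : ℝ)
    (h : ∀ x ∈ P.carrier, b x = r) : b = 0 := by
  obtain ⟨p, hp⟩ := P.int_nonempty
  ext z
  have hcont : Continuous (fun ε : ℝ => p + ε • z) := by fun_prop
  have hnh : ∀ᶠ ε : ℝ in nhds 0, p + ε • z ∈ P.carrier := by
    have : P.carrier ∈ nhds ((fun ε : ℝ => p + ε • z) 0) := by
      simpa using mem_interior_iff_mem_nhds.1 hp
    exact hcont.continuousAt.eventually this
  have h3 : ∀ᶠ ε : ℝ in nhdsWithin 0 (Set.Ioi 0), 0 < ε := self_mem_nhdsWithin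
  obtain ⟨ε, h1, h2⟩ := ((hnh.filter_mono nhdsWithin_le_nhds).and h3).exists
  have e1 := h _ h1
  have e2 := h _ (interior_subset hp)
  simp only [map_add, map_smul, smul_eq_mul, e2] at e1
  have : ε * b z = 0 := by linarith
  simpa [h2.ne'] using this

/-- Generators of the polytope relative to a point. -/
theorem aux_gens (P : ConvPolytope d) (v : EuclideanSpace ℝ (Fin d)) :
    ∃ T : Finset (EuclideanSpace ℝ (Fin d)), (∀ t ∈ T, v + t ∈ P.carrier) ∧
      (∀ g : EuclideanSpace ℝ (Fin d) →L[ℝ] ℝ, (∀ t ∈ T, g t ≤ 0) →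
        ∀ x ∈ P.carrier, g x ≤ g v) ∧
      ∀ b : EuclideanSpace ℝ (Fin d) →L[ℝ] ℝ, (∀ t ∈ T, b t = 0) → b = 0 := by
  classical
  obtain ⟨s, hs⟩ := P.isHull
  have h2 : ∀ g : EuclideanSpace ℝ (Fin d) →L[ℝ] ℝ, (∀ t ∈ s.image (fun x => x - v), g t ≤ 0) →
        ∀ x ∈ P.carrier, g x ≤ g v := by
    intro g hg x hx
    rw [hs] at hx
    have hconv : Convex ℝ {x | g x ≤ g v} := convex_halfSpace_le g.toLinearMap.isLinear _
    refine convexHull_min (t := {x | g x ≤ g v}) ?_ hconv hx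
    intro x hx
    have := hg (x - v) (Finset.mem_image_of_mem _ hx)
    rw [map_sub] at this
    simpa using this
  refine ⟨s.image (fun x => x - v), ?_, h2, ?_⟩
  · intro t ht
    obtain ⟨x, hx, rfl⟩ := Finset.mem_image.1 ht
    rw [hs]
    simpa using subset_convexHull ℝ _ hx
  · intro b hb
    refine aux_const P b (b v) fun x hx => le_antisymm (h2 b (fun t ht => (hb t ht).le) x hx) ?_
    have := h2 (-b) (fun t ht => by simp [hb t ht]) x hx
    simpa using this

/-- `a` is a functional defining the face `F` through `v`. -/
def AuxDef (P : ConvPolytope d) (v : EuclideanSpace ℝ (Fin d))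
    (F : Set (EuclideanSpace ℝ (Fin d))) (a : EuclideanSpace ℝ (Fin d) →L[ℝ] ℝ) : Prop :=
  a ≠ 0 ∧ (∀ x ∈ P.carrier, a x ≤ a v) ∧ F = {x ∈ P.carrier | a x = a v}

theorem aux_exists_def (P : ConvPolytope d) (v : EuclideanSpace ℝ (Fin d))
    (F : Set (EuclideanSpace ℝ (Fin d))) (hF : P.IsFace F) (hv : v ∈ F) :
    ∃ a, AuxDef P v F a := by
  obtain ⟨a, c, h0, h1, h2⟩ := hF
  have : a v = c := by rw [h2] at hv; exact hv.2
  subst this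
  exact ⟨a, h0, h1, h2⟩

theorem aux_face_mem {P : ConvPolytope d} {v : EuclideanSpace ℝ (Fin d)}
    {F : Set (EuclideanSpace ℝ (Fin d))} (hF : P.IsFace F) (hv : v ∈ F) : v ∈ P.carrier := by
  obtain ⟨a, c, h0, h1, h2⟩ := hF
  rw [h2] at hv; exact hv.1

theorem aux_dir_le (P : ConvPolytope d) (v : EuclideanSpace ℝ (Fin d))
    (F : Set (EuclideanSpace ℝ (Fin d))) (a : EuclideanSpace ℝ (Fin d) →L[ℝ] ℝ)
    (ha : AuxDef P v F a) :
    (affineSpan ℝ F).direction ≤ LinearMap.ker a.toLinearMap := by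
  rw [direction_affineSpan, vectorSpan_def, Submodule.span_le]
  rintro _ ⟨x, hx, y, hy, rfl⟩
  rw [ha.2.2] at hx hy
  simp [hx.2, hy.2]

theorem aux_finrank_ker (a : EuclideanSpace ℝ (Fin d) →L[ℝ] ℝ) (ha : a ≠ 0) :
    Module.finrank ℝ (LinearMap.ker a.toLinearMap) = d - 1 := by
  have h : a.toLinearMap ≠ 0 := by
    intro h
    apply ha
    ext x
    exact congrArg (fun g => g x) h
  have := Module.Dual.finrank_ker_add_one_of_ne_zero (f := a.toLinearMap) h
  rw [finrank_euclideanSpace_fin] at this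
  omega

theorem aux_dir_eq (P : ConvPolytope d) (v : EuclideanSpace ℝ (Fin d))
    (F : Set (EuclideanSpace ℝ (Fin d))) (a : EuclideanSpace ℝ (Fin d) →L[ℝ] ℝ)
    (ha : AuxDef P v F a) (hF : P.IsFacetOf F) :
    (affineSpan ℝ F).direction = LinearMap.ker a.toLinearMap := by
  apply Submodule.eq_of_le_of_finrank_eq (aux_dir_le P v F a ha)
  rw [aux_finrank_ker a ha.1]
  exact hF.2.2

/-- Two functionals defining the same facet have the same sign. -/
theorem aux_same_sign (P : ConvPolytope d) (v : EuclideanSpace ℝ (Fin d))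
    (F : Set (EuclideanSpace ℝ (Fin d))) (a b : EuclideanSpace ℝ (Fin d) →L[ℝ] ℝ)
    (ha : AuxDef P v F a) (hb : AuxDef P v F b) (hF : P.IsFacetOf F)
    (y : EuclideanSpace ℝ (Fin d)) (hy : 0 < a y) : 0 < b y := by
  have hk : LinearMap.ker a.toLinearMap = LinearMap.ker b.toLinearMap := by
    rw [← aux_dir_eq P v F a ha hF, ← aux_dir_eq P v F b hb hF]
  have hp : ∃ p ∈ P.carrier, a p ≠ a v := by
    by_contra! hcon
    exact ha.1 (aux_const P a _ hcon)
  obtain ⟨p, hp, hpa⟩ := hp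
  have hpF : p ∉ F := by
    rw [ha.2.2]; exact fun h => hpa h.2
  have h1 : a p - a v < 0 := sub_neg.2 (lt_of_le_of_ne (ha.2.1 p hp) hpa)
  have h2 : b p - b v < 0 := by
    refine sub_neg.2 (lt_of_le_of_ne (hb.2.1 p hp) fun h => hpF ?_)
    rw [hb.2.2]; exact ⟨hp, h⟩
  have hz : (a p - a v) • y - a y • (p - v) ∈ LinearMap.ker a.toLinearMap := by
    simp; ring
  rw [hk] at hz
  simp only [LinearMap.mem_ker, ContinuousLinearMap.coe_coe, map_sub, map_smul, smul_eq_mul] at hz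
  by_contra hcon
  push Not at hcon
  nlinarith [mul_pos hy (neg_pos.2 h2), mul_nonneg_of_nonpos_of_nonpos h1.le hcon]

/-- If a functional is maximised over `P` at `v` and positive on `y`, then a facet functional at
`v` is positive on `y`. -/
theorem aux_facet (P : ConvPolytope d) (v : EuclideanSpace ℝ (Fin d)) (hv : v ∈ P.carrier)
    (f : EuclideanSpace ℝ (Fin d) →L[ℝ] ℝ) (hf : ∀ x ∈ P.carrier, f x ≤ f v)
    (y : EuclideanSpace ℝ (Fin d)) (hy : 0 < f y) :
    ∃ F a, P.IsFacetOf F ∧ v ∈ F ∧ AuxDef P v F a ∧ 0 < a y := by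
  obtain ⟨T, hT1, hT2, hT3⟩ := aux_gens P v
  have hfT : ∀ t ∈ T, f t ≤ 0 := fun t ht => by
    have := hf _ (hT1 t ht)
    rw [map_add] at this
    linarith
  obtain ⟨a, ha, hay, hker⟩ := aux_improve T hT3 y f hfT hy
  have ha0 : a ≠ 0 := by rintro rfl; simp at hay
  have hmax := hT2 a ha
  have hdef : AuxDef P v {x ∈ P.carrier | a x = a v} a := ⟨ha0, hmax, rfl⟩
  have hvF : v ∈ {x ∈ P.carrier | a x = a v} := ⟨hv, rfl⟩
  refine ⟨{x ∈ P.carrier | a x = a v}, a, ⟨⟨a, a v, ha0, hmax, rfl⟩, ⟨v, hvF⟩, ?_⟩, hvF, hdef, hay⟩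
  rw [dimOf, ← aux_finrank_ker a ha0]
  have : (affineSpan ℝ {x ∈ P.carrier | a x = a v}).direction = LinearMap.ker a.toLinearMap := by
    apply le_antisymm (aux_dir_le P v _ a hdef)
    intro z hz
    have hz' := hker z hz
    refine (Submodule.span_le.2 ?_) hz'
    rintro t ⟨ht, hat⟩
    have h1 : v + t ∈ {x ∈ P.carrier | a x = a v} := ⟨hT1 t ht, by simp [hat]⟩
    have := AffineSubspace.vsub_mem_direction (subset_affineSpan ℝ _ h1)
      (subset_affineSpan ℝ _ hvF)
    simpa using this
  rw [this]

/-- The two endpoints of an edge are vertices. -/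
theorem aux_edge_vertex (P : ConvPolytope d) (v w : EuclideanSpace ℝ (Fin d))
    (h : P.IsEdge v w) : P.IsVertex v := by
  obtain ⟨hne, hface⟩ := h
  obtain ⟨f, hf0, hf1, hf2⟩ := aux_exists_def P v _ hface (left_mem_segment ℝ v w)
  have hvP := aux_face_mem hface (left_mem_segment ℝ v w)
  have hwP := aux_face_mem hface (right_mem_segment ℝ v w)
  have hfw : f w = f v := by
    have := right_mem_segment ℝ v w
    rw [hf2] at this; exact this.2
  have hseg : ∀ x ∈ P.carrier, f x = f v → ∃ k : ℝ, 0 ≤ k ∧ x - v = k • (w - v) := by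
    intro x hx hfx
    have : x ∈ segment ℝ v w := by rw [hf2]; exact ⟨hx, hfx⟩
    rw [segment_eq_image'] at this
    obtain ⟨k, hk, rfl⟩ := this
    exact ⟨k, hk.1, by simp⟩
  obtain ⟨T, hT1, hT2, hT3⟩ := aux_gens P v
  let b : EuclideanSpace ℝ (Fin d) →L[ℝ] ℝ := innerSL ℝ (v - w)
  have hbw : b (w - v) < 0 := by
    have : b (w - v) = - inner ℝ (v - w) (v - w) := by
      rw [← inner_neg_right, neg_sub]; rfl
    rw [this, neg_lt_zero, real_inner_self_eq_norm_sq]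
    have := norm_pos_iff.2 (sub_ne_zero.2 hne)
    positivity
  obtain ⟨ε, hε, hεT⟩ := aux_perturb T f b
    (fun t ht => by have := hf1 _ (hT1 t ht); rw [map_add] at this; linarith)
    (fun t ht hft => by
      obtain ⟨k, hk, hkt⟩ := hseg _ (hT1 t ht) (by simp [hft])
      have : t = k • (w - v) := by simpa using hkt
      rw [this, map_smul, smul_eq_mul]
      nlinarith)
  have hεP := hT2 _ hεT
  simp only [add_apply, smul_apply, smul_eq_mul] at hεP
  refine ⟨f + (ε / 2) • b, (f + (ε / 2) • b) v, ?_, ?_, ?_⟩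
  · intro h0
    have := congrArg (fun g => g (w - v)) h0
    simp only [add_apply, smul_apply, smul_eq_mul, zero_apply] at this
    rw [map_sub f, hfw] at this
    nlinarith
  · intro x hx
    have h1 := hf1 x hx
    have h2 := hεP x hx
    simp only [add_apply, smul_apply, smul_eq_mul]
    linarith
  · ext x
    simp only [Set.mem_singleton_iff, Set.mem_ofPred_eq]
    constructor
    · rintro rfl
      exact ⟨hvP, rfl⟩
    · rintro ⟨hx, hxe⟩
      have h1 := hf1 x hx
      have h2 := hεP x hx
      simp only [add_apply, smul_apply, smul_eq_mul] at hxe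
      have h3 : f x = f v := by linarith
      have h4 : ε * (b x - b v) = 0 := by linarith
      have h5 : b (x - v) = 0 := by
        rw [map_sub]; rcases mul_eq_zero.1 h4 with h | h
        · exact absurd h hε.ne'
        · exact h
      obtain ⟨k, hk, hkx⟩ := hseg x hx h3
      rw [hkx, map_smul, smul_eq_mul] at h5
      rcases mul_eq_zero.1 h5 with h | h
      · rw [h, zero_smul] at hkx; exact sub_eq_zero.1 hkx
      · exact absurd h hbw.ne

/-- Facets at a point, as a type. -/
abbrev AuxFac (P : ConvPolytope d) (v : EuclideanSpace ℝ (Fin d)) : Type :=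
  {F : Set (EuclideanSpace ℝ (Fin d)) // P.IsFacetOf F ∧ v ∈ F}

/-- Coordinates at a simple vertex. -/
theorem aux_coords (P : ConvPolytope d) (hsimple : P.IsSimple) (hd : d ≠ 0)
    (v : EuclideanSpace ℝ (Fin d)) (hv : P.IsVertex v) :
    ∃ a : AuxFac P v → (EuclideanSpace ℝ (Fin d) →L[ℝ] ℝ),
      (∀ F : AuxFac P v, AuxDef P v F.1 (a F)) ∧
      (∀ y, (∀ F, a F y = 0) → y = 0) ∧
      (∀ r : AuxFac P v → ℝ, ∃ y, ∀ F, a F y = r F) ∧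
      (∀ f : EuclideanSpace ℝ (Fin d) →L[ℝ] ℝ, (∀ x ∈ P.carrier, f x ≤ f v) →
        ∀ y, (∀ F, a F y ≤ 0) → f y ≤ 0) := by
  have hvP : v ∈ P.carrier := aux_face_mem hv rfl
  have hcard : Nat.card (AuxFac P v) = d := hsimple v hv
  have : Finite (AuxFac P v) := Nat.finite_of_card_ne_zero (by rw [hcard]; exact hd)
  have : Fintype (AuxFac P v) := Fintype.ofFinite _
  choose a ha using fun F : AuxFac P v => aux_exists_def P v F.1 F.2.1.1 F.2.2
  have h4 : ∀ f : EuclideanSpace ℝ (Fin d) →L[ℝ] ℝ, (∀ x ∈ P.carrier, f x ≤ f v) →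
        ∀ y, (∀ F, a F y ≤ 0) → f y ≤ 0 := by
    intro f hf y hy
    by_contra hcon
    push Not at hcon
    obtain ⟨F, b, hF, hvF, hb, hby⟩ := aux_facet P v hvP f hf y hcon
    have := aux_same_sign P v F b (a ⟨F, hF, hvF⟩) hb (ha ⟨F, hF, hvF⟩) hF y hby
    linarith [hy ⟨F, hF, hvF⟩]
  have h2 : ∀ y, (∀ F, a F y = 0) → y = 0 := by
    intro y hy
    by_contra hy0
    obtain ⟨f, hf0, hf1, hf2⟩ := aux_exists_def P v _ hv rfl
    obtain ⟨T, hT1, hT2, hT3⟩ := aux_gens P v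
    let b : EuclideanSpace ℝ (Fin d) →L[ℝ] ℝ := innerSL ℝ y
    have hby : 0 < b y := by
      have : b y = inner ℝ y y := rfl
      rw [this, real_inner_self_eq_norm_sq]
      have := norm_pos_iff.2 hy0
      positivity
    obtain ⟨ε, hε, hεT⟩ := aux_perturb T f b
      (fun t ht => by have := hf1 _ (hT1 t ht); rw [map_add] at this; linarith)
      (fun t ht hft => by
        have : v + t ∈ ({v} : Set (EuclideanSpace ℝ (Fin d))) := by
          rw [hf2]; exact ⟨hT1 t ht, by simp [hft]⟩
        have : t = 0 := by simpa using this
        simp [this])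
    have e1 := h4 _ (hT2 _ hεT) y (fun F => (hy F).le)
    have e2 := h4 f hf1 (-y) (fun F => by simp [hy F])
    simp only [add_apply, smul_apply, smul_eq_mul, map_neg] at e1 e2
    nlinarith [mul_pos hε hby]
  refine ⟨a, ha, h2, ?_, h4⟩
  let L : EuclideanSpace ℝ (Fin d) →ₗ[ℝ] (AuxFac P v → ℝ) :=
    LinearMap.pi (fun F => (a F).toLinearMap)
  have hinj : Function.Injective L := by
    rw [← LinearMap.ker_eq_bot, LinearMap.ker_eq_bot']
    intro y hy
    exact h2 y (fun F => congrFun hy F)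
  have hsurj : Function.Surjective L := by
    refine (LinearMap.injective_iff_surjective_of_finrank_eq_finrank ?_).1 hinj
    rw [finrank_euclideanSpace_fin, Module.finrank_fintype_fun_eq_card, ← Nat.card_eq_fintype_card,
      hcard]
  intro r
  obtain ⟨y, hy⟩ := hsurj r
  exact ⟨y, fun F => congrFun hy F⟩

/-- At most one facet at `v` misses the other endpoint `w`. -/
theorem aux_unique (P : ConvPolytope d) (hsimple : P.IsSimple) (hd : d ≠ 0)
    (v w : EuclideanSpace ℝ (Fin d)) (h : P.IsEdge v w)
    (F G : Set (EuclideanSpace ℝ (Fin d))) (hF : P.IsFacetOf F) (hvF : v ∈ F) (hwF : w ∉ F)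
    (hG : P.IsFacetOf G) (hvG : v ∈ G) (hwG : w ∉ G) : F = G := by
  classical
  by_contra hFG
  have hv := aux_edge_vertex P v w h
  obtain ⟨a, ha, hinj, hsurj, hcone⟩ := aux_coords P hsimple hd v hv
  obtain ⟨hne, hface⟩ := h
  obtain ⟨f, hf0, hf1, hf2⟩ := aux_exists_def P v _ hface (left_mem_segment ℝ v w)
  have hwP := aux_face_mem hface (right_mem_segment ℝ v w)
  have hfw : f w = f v := by
    have := right_mem_segment ℝ v w
    rw [hf2] at this; exact this.2
  let F' : AuxFac P v := ⟨F, hF, hvF⟩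
  let G' : AuxFac P v := ⟨G, hG, hvG⟩
  have hFG' : G' ≠ F' := fun h => hFG (congrArg Subtype.val h).symm
  have hle : ∀ K, a K (w - v) ≤ 0 := fun K => by
    rw [map_sub]; linarith [(ha K).2.1 w hwP]
  have hneg : ∀ K : AuxFac P v, w ∉ K.1 → a K (w - v) < 0 := by
    intro K hK
    refine lt_of_le_of_ne (hle K) fun h0 => hK ?_
    rw [(ha K).2.2]
    rw [map_sub] at h0
    exact ⟨hwP, by linarith⟩
  have hF0 := hneg F' hwF
  have hG0 := hneg G' hwG
  obtain ⟨y, hy⟩ := hsurj (fun K => if K = F' then a F' (w - v) else 0)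
  have hyF : a F' y = a F' (w - v) := by simpa using hy F'
  have hyG : a G' y = 0 := by simpa [hFG'] using hy G'
  have hy1 : ∀ K, a K y ≤ 0 := by
    intro K
    rw [hy K]
    split_ifs
    · exact hF0.le
    · exact le_rfl
  have hy2 : ∀ K, a K (w - v - y) ≤ 0 := by
    intro K
    rw [map_sub (a K), hy K]
    split_ifs with h
    · rw [h]; simp
    · simpa using hle K
  obtain ⟨T, hT1, hT2, hT3⟩ := aux_gens P v
  let b : EuclideanSpace ℝ (Fin d) →L[ℝ] ℝ := (a F' (w - v) / a G' (w - v)) • a G' - a F'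
  have hbw : b (w - v) = 0 := by
    have : b (w - v) = (a F' (w - v) / a G' (w - v)) * a G' (w - v) - a F' (w - v) := rfl
    rw [this, div_mul_cancel₀ _ hG0.ne, sub_self]
  have hby : 0 < b y := by
    have : b y = (a F' (w - v) / a G' (w - v)) * a G' y - a F' y := rfl
    rw [this, hyG, hyF]; linarith
  obtain ⟨ε, hε, hεT⟩ := aux_perturb T f b
    (fun t ht => by have := hf1 _ (hT1 t ht); rw [map_add] at this; linarith)
    (fun t ht hft => by
      have : v + t ∈ segment ℝ v w := by rw [hf2]; exact ⟨hT1 t ht, by simp [hft]⟩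
      rw [segment_eq_image'] at this
      obtain ⟨k, hk, hkt⟩ := this
      have : t = k • (w - v) := (add_left_cancel hkt).symm
      rw [this, map_smul, hbw, smul_zero])
  have e1 := hcone _ (hT2 _ hεT) y hy1
  have e2 := hcone f hf1 _ hy2
  rw [map_sub f, map_sub f, hfw] at e2
  simp only [add_apply, smul_apply, smul_eq_mul] at e1
  nlinarith [mul_pos hε hby]

/-- An edge at `u` is determined by the facet it leaves. -/
theorem aux_second (P : ConvPolytope d) (hsimple : P.IsSimple) (hd : d ≠ 0)
    (u v w : EuclideanSpace ℝ (Fin d)) (h : P.IsEdge u v) (h' : P.IsEdge u w)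
    (F : Set (EuclideanSpace ℝ (Fin d))) (hF : P.IsFacetOf F) (huF : u ∈ F) (hvF : v ∉ F)
    (hwF : w ∉ F) : v = w := by
  have hu := aux_edge_vertex P u v h
  obtain ⟨a, ha, hinj, hsurj, hcone⟩ := aux_coords P hsimple hd u hu
  let F' : AuxFac P u := ⟨F, hF, huF⟩
  have key : ∀ x, P.IsEdge u x → x ∉ F → x ∈ P.carrier ∧ a F' (x - u) < 0 ∧
      (∀ K, K ≠ F' → a K (x - u) = 0) ∧ ∀ z ∈ P.carrier, ∀ l : ℝ, z - u = l • (x - u) → l ≤ 1 := by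
    intro x hx hxF
    have hxP := aux_face_mem hx.2 (right_mem_segment ℝ u x)
    have hle : ∀ K, a K (x - u) ≤ 0 := fun K => by
      rw [map_sub]; linarith [(ha K).2.1 x hxP]
    refine ⟨hxP, ?_, ?_, ?_⟩
    · refine lt_of_le_of_ne (hle F') fun h0 => hxF ?_
      change x ∈ F'.1
      rw [(ha F').2.2]
      rw [map_sub] at h0
      exact ⟨hxP, by linarith⟩
    · intro K hK
      by_contra h0
      apply hK
      apply Subtype.ext
      refine aux_unique P hsimple hd u x hx K.1 F K.2.1 K.2.2 ?_ hF huF hxF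
      intro hxK
      rw [(ha K).2.2] at hxK
      apply h0
      rw [map_sub, hxK.2, sub_self]
    · intro z hz l hl
      obtain ⟨f, hf0, hf1, hf2⟩ := aux_exists_def P u _ hx.2 (left_mem_segment ℝ u x)
      have hfx : f x = f u := by
        have := right_mem_segment ℝ u x
        rw [hf2] at this; exact this.2
      have hfz : f z = f u := by
        have := congrArg f hl
        rw [map_sub, map_smul, map_sub, hfx, sub_self, smul_zero] at this
        linarith
      have hzs : z ∈ segment ℝ u x := by rw [hf2]; exact ⟨hz, hfz⟩
      rw [segment_eq_image'] at hzs
      obtain ⟨k, hk, rfl⟩ := hzs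
      have h1 : k • (x - u) = l • (x - u) := by simpa using hl
      have h2 : k = l := smul_left_injective ℝ (sub_ne_zero.2 hx.1.symm) h1
      rw [← h2]; exact hk.2
  obtain ⟨hvP, hv1, hv2, hv3⟩ := key v h hvF
  obtain ⟨hwP, hw1, hw2, hw3⟩ := key w h' hwF
  have par : ∀ x z, a F' (x - u) < 0 → (∀ K, K ≠ F' → a K (x - u) = 0) →
      (∀ K, K ≠ F' → a K (z - u) = 0) → z - u = (a F' (z - u) / a F' (x - u)) • (x - u) := by
    intro x z hx1 hx2 hz2
    rw [← sub_eq_zero]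
    apply hinj
    intro K
    rw [map_sub (a K), map_smul, smul_eq_mul]
    by_cases hK : K = F'
    · rw [hK, div_mul_cancel₀ _ hx1.ne, sub_self]
    · rw [hz2 K hK, hx2 K hK]; simp
  have p1 := par v w hv1 hv2 hw2
  have l1 := hv3 w hwP _ p1
  have l2 := hw3 v hvP _ (par w v hw1 hw2 hv2)
  rw [div_le_one_of_neg hv1] at l1
  rw [div_le_one_of_neg hw1] at l2
  rw [le_antisymm l2 l1, div_self hv1.ne, one_smul] at p1
  exact (sub_left_injective p1).symm

end Helpers

/-- **Proposition (edge coloring)**: let `P` be a simple `d`-polytope and `c` a proper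
`d`-coloring of the facets of `P` (distinct facets sharing a vertex get distinct colors).
Then for every edge `{v,w}` the facets `F(v,w)` and `F(w,v)` get the same color, and
assigning this common color to the edge yields a proper edge coloring of the
vertex-edge-graph of `P` with `d` colors: two distinct edges sharing a vertex `u` receive
distinct colors. -/
theorem facet_coloring_induces_edge_coloring (d : ℕ) (P : ConvPolytope d)
    (hsimple : P.IsSimple) (c : Set (EuclideanSpace ℝ (Fin d)) → Fin d)
    (hc : ∀ F G, P.IsFacetOf F → P.IsFacetOf G → F ≠ G →
      (∃ u, P.IsVertex u ∧ u ∈ F ∩ G) → c F ≠ c G) :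
    (∀ v w, P.IsEdge v w →
      ∀ F G, P.IsFacetOf F → v ∈ F → w ∉ F → P.IsFacetOf G → w ∈ G → v ∉ G →
        c F = c G) ∧
    (∀ u v w, v ≠ w → P.IsEdge u v → P.IsEdge u w →
      ∀ F G, P.IsFacetOf F → u ∈ F → v ∉ F → P.IsFacetOf G → u ∈ G → w ∉ G →
        c F ≠ c G) := by
  have hd : d ≠ 0 := by
    rintro rfl
    exact (c ∅).elim0
  constructor
  · intro v w hvw F G hF hvF hwF hG hwG hvG
    have hv := aux_edge_vertex P v w hvw
    have hw : P.IsVertex w := aux_edge_vertex P w v ⟨hvw.1.symm, by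
      rw [segment_symm]; exact hvw.2⟩
    have hcard : Nat.card (AuxFac P v) = d := hsimple v hv
    have : Finite (AuxFac P v) := Nat.finite_of_card_ne_zero (by rw [hcard]; exact hd)
    let φ : AuxFac P v → Fin d := fun K => c K.1
    have hinj : Function.Injective φ := by
      intro K L hKL
      by_contra hne
      exact hc K.1 L.1 K.2.1 L.2.1 (fun h => hne (Subtype.ext h)) ⟨v, hv, K.2.2, L.2.2⟩ hKL
    have hbij : Function.Bijective φ :=
      (Nat.bijective_iff_injective_and_card φ).2 ⟨hinj, by rw [hcard, Nat.card_fin]⟩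
    obtain ⟨K, hK⟩ := hbij.2 (c G)
    have hK' : c K.1 = c G := hK
    by_cases hwK : w ∈ K.1
    · exact absurd hK' (hc K.1 G K.2.1 hG (fun h => hvG (h ▸ K.2.2)) ⟨w, hw, hwK, hwG⟩)
    · rw [aux_unique P hsimple hd v w hvw F K.1 hF hvF hwF K.2.1 K.2.2 hwK]
      exact hK'
  · intro u v w hne huv huw F G hF huF hvF hG huG hwG hcc
    have hu := aux_edge_vertex P u v huv
    have hFG : F = G := by
      by_contra h
      exact hc F G hF hG h ⟨u, hu, huF, huG⟩ hcc
    subst hFG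
    exact hne (aux_second P hsimple hd u v w huv huw F hF huF hvF hwG)
end
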